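/- Let T be a universal continuous first-order theory which has a model companion T', and assume T' is ℵ₀-categorical (any two separable models of T' are isomorphic). Then any existentially closed separable model of T is generic in 𝔖_T, i.e. its isomorphism class is a G_δ dense subset of 𝔖_T. -/

import Mathlib

open scoped Classical

/-! ### A core of continuous first-order logic (countable relational signatures) -/

/-- A countable relational continuous signature: relation symbols indexed by `ℕ`
(with a distinguished metric symbol handled separately in the syntax below),
each with an arity and a prescribed uniform-continuity modulus. -/
structure CSig where
  arity : ℕ → ℕ
  modulus : ℕ → ℝ → ℝ
  modulus_pos : ∀ i ε, 0 < ε → 0 < modulus i ε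

/-- Continuous first-order formulas over `S`, with free variables among `Fin n`.
Connectives: rational constants, pointwise min and max, negation `1 - x`,
truncated plus, truncated minus, `|x - y|`, rescaling by rationals; quantifiers
`inf` and `sup` bind the last variable. -/
inductive CFormula (S : CSig) : ℕ → Type
  | dst : ∀ {n}, Fin n → Fin n → CFormula S n
  | rel : ∀ {n} (i : ℕ), (Fin (S.arity i) → Fin n) → CFormula S n
  | const : ∀ {n}, ℚ → CFormula S n
  | fmin : ∀ {n}, CFormula S n → CFormula S n → CFormula S n
  | fmax : ∀ {n}, CFormula S n → CFormula S n → CFormula S n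
  | neg : ∀ {n}, CFormula S n → CFormula S n
  | addT : ∀ {n}, CFormula S n → CFormula S n → CFormula S n
  | subT : ∀ {n}, CFormula S n → CFormula S n → CFormula S n
  | absd : ∀ {n}, CFormula S n → CFormula S n → CFormula S n
  | scale : ∀ {n}, ℚ → CFormula S n → CFormula S n
  | inf : ∀ {n}, CFormula S (n + 1) → CFormula S n
  | sup : ∀ {n}, CFormula S (n + 1) → CFormula S n

/-- Sentences: formulas with no free variables. -/
abbrev CSentence (S : CSig) := CFormula S 0

/-- Quantifier-free formulas. -/
inductive IsQF {S : CSig} : ∀ {n}, CFormula S n → Prop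
  | dst {n} (a b : Fin n) : IsQF (CFormula.dst a b)
  | rel {n} (i : ℕ) (ts : Fin (S.arity i) → Fin n) : IsQF (CFormula.rel i ts)
  | const {n} (q : ℚ) : IsQF (CFormula.const (n := n) q)
  | fmin {n} {φ ψ : CFormula S n} : IsQF φ → IsQF ψ → IsQF (CFormula.fmin φ ψ)
  | fmax {n} {φ ψ : CFormula S n} : IsQF φ → IsQF ψ → IsQF (CFormula.fmax φ ψ)
  | neg {n} {φ : CFormula S n} : IsQF φ → IsQF (CFormula.neg φ)
  | addT {n} {φ ψ : CFormula S n} : IsQF φ → IsQF ψ → IsQF (CFormula.addT φ ψ)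
  | subT {n} {φ ψ : CFormula S n} : IsQF φ → IsQF ψ → IsQF (CFormula.subT φ ψ)
  | absd {n} {φ ψ : CFormula S n} : IsQF φ → IsQF ψ → IsQF (CFormula.absd φ ψ)
  | scale {n} (q : ℚ) {φ : CFormula S n} : IsQF φ → IsQF (CFormula.scale q φ)

/-- Closure of a class of formulas under (finitely many applications of) `inf`. -/
inductive InfCl {S : CSig} (P : ∀ n, CFormula S n → Prop) : ∀ {n}, CFormula S n → Prop
  | base {n} {φ : CFormula S n} : P n φ → InfCl P φ
  | step {n} {φ : CFormula S (n + 1)} : InfCl P φ → InfCl P (CFormula.inf φ)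

/-- Closure of a class of formulas under (finitely many applications of) `sup`. -/
inductive SupCl {S : CSig} (P : ∀ n, CFormula S n → Prop) : ∀ {n}, CFormula S n → Prop
  | base {n} {φ : CFormula S n} : P n φ → SupCl P φ
  | step {n} {φ : CFormula S (n + 1)} : SupCl P φ → SupCl P (CFormula.sup φ)

/-- The pair (Σₖ, Πₖ) of formula classes: Σ₀ = Π₀ = quantifier-free,
Σ_{k+1} = { inf_x̄ φ : φ ∈ Πₖ }, Π_{k+1} = { sup_x̄ φ : φ ∈ Σₖ }. -/
def SigmaPi (S : CSig) : ℕ → ((∀ n, CFormula S n → Prop) × (∀ n, CFormula S n → Prop))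
  | 0 => (fun _ φ => IsQF φ, fun _ φ => IsQF φ)
  | k + 1 => (fun _ φ => InfCl (SigmaPi S k).2 φ, fun _ φ => SupCl (SigmaPi S k).1 φ)

/-- `φ` is a Σₖ formula. -/
def IsSigmaN (S : CSig) (k : ℕ) {n : ℕ} (φ : CFormula S n) : Prop := (SigmaPi S k).1 n φ

/-- `φ` is a Πₖ formula. -/
def IsPiN (S : CSig) (k : ℕ) {n : ℕ} (φ : CFormula S n) : Prop := (SigmaPi S k).2 n φ

/-- A continuous `L`-structure: a nonempty complete metric space of diameter `≤ 1`
with `[0,1]`-valued interpretations of all predicate symbols, uniformly continuous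
with respect to the prescribed moduli. -/
structure CStructure (S : CSig) where
  Carrier : Type
  metric : MetricSpace Carrier
  nonempty : Nonempty Carrier
  complete : @CompleteSpace Carrier metric.toUniformSpace
  bounded : ∀ x y : Carrier, @dist Carrier metric.toDist x y ≤ 1
  rel : ∀ i, (Fin (S.arity i) → Carrier) → ℝ
  rel_nonneg : ∀ i v, 0 ≤ rel i v
  rel_le_one : ∀ i v, rel i v ≤ 1
  rel_uc : ∀ i (ε : ℝ), 0 < ε → ∀ v w,
    (∀ j, @dist Carrier metric.toDist (v j) (w j) < S.modulus i ε) → |rel i v - rel i w| ≤ ε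

attribute [instance] CStructure.metric CStructure.nonempty CStructure.complete

/-- Clamp a rational constant into `[0,1]`. -/
noncomputable def clampQ (q : ℚ) : ℝ := max 0 (min 1 (q : ℝ))

/-- The value of a formula in a structure under a variable assignment. -/
noncomputable def CStructure.eval {S : CSig} (M : CStructure S) :
    ∀ (n : ℕ), CFormula S n → (Fin n → M.Carrier) → ℝ
  | _, .dst a b, v => dist (v a) (v b)
  | _, .rel i ts, v => M.rel i fun j => v (ts j)
  | _, .const q, _ => clampQ q
  | n, .fmin φ ψ, v => min (M.eval n φ v) (M.eval n ψ v)
  | n, .fmax φ ψ, v => max (M.eval n φ v) (M.eval n ψ v)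
  | n, .neg φ, v => 1 - M.eval n φ v
  | n, .addT φ ψ, v => min 1 (M.eval n φ v + M.eval n ψ v)
  | n, .subT φ ψ, v => max 0 (M.eval n φ v - M.eval n ψ v)
  | n, .absd φ ψ, v => |M.eval n φ v - M.eval n ψ v|
  | n, .scale q φ, v => clampQ q * M.eval n φ v
  | n, .inf φ, v => ⨅ x : M.Carrier, M.eval (n + 1) φ (Fin.snoc v x)
  | n, .sup φ, v => ⨆ x : M.Carrier, M.eval (n + 1) φ (Fin.snoc v x)

/-- The value of a sentence in a structure. -/
noncomputable def CStructure.sval {S : CSig} (M : CStructure S) (φ : CSentence S) : ℝ :=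
  M.eval 0 φ (fun i => i.elim0)

/-- A theory: a set of closed conditions `φ ≤ ε`, coded as pairs `(φ, ε)`. -/
abbrev CTheory (S : CSig) := Set (CSentence S × ℝ)

/-- `M` satisfies the theory `T` (all its closed conditions). -/
def CStructure.SatT {S : CSig} (M : CStructure S) (T : CTheory S) : Prop :=
  ∀ c ∈ T, M.sval c.1 ≤ c.2

/-- The closed condition `φ ≤ ε` follows from `T`. -/
def Entails {S : CSig} (T : CTheory S) (c : CSentence S × ℝ) : Prop :=
  ∀ M : CStructure S, M.SatT T → M.sval c.1 ≤ c.2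

/-- The open condition `φ < ε` follows from `T`. -/
def EntailsOpen {S : CSig} (T : CTheory S) (c : CSentence S × ℝ) : Prop :=
  ∀ M : CStructure S, M.SatT T → M.sval c.1 < c.2

/-- `T` is a theory in the official sense: consistent and closed under entailment. -/
def IsTheory {S : CSig} (T : CTheory S) : Prop :=
  (∃ M : CStructure S, M.SatT T) ∧ ∀ c, Entails T c → c ∈ T

/-- `T` is universal: axiomatizable by closed conditions `sup_x̄ φ(x̄) = 0` with `φ`
quantifier-free (i.e. by conditions `ψ = 0` for Π₁ sentences `ψ`). -/
def IsUniversalTheory {S : CSig} (T : CTheory S) : Prop :=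
  ∃ A : Set (CSentence S), (∀ ψ ∈ A, IsPiN S 1 ψ) ∧
    ∀ M : CStructure S, (M.SatT T ↔ ∀ ψ ∈ A, M.sval ψ = 0)

/-- `T` is inductive: axiomatizable by open conditions `sup_x̄ inf_ȳ φ(x̄,ȳ) < ε` with `φ`
quantifier-free (i.e. by open conditions on Π₂ sentences). -/
def IsInductiveTheory {S : CSig} (T : CTheory S) : Prop :=
  ∃ A : Set (CSentence S × ℝ), (∀ c ∈ A, IsPiN S 2 c.1 ∧ 0 < c.2) ∧
    ∀ M : CStructure S, (M.SatT T ↔ ∀ c ∈ A, M.sval c.1 < c.2)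

/-- An embedding of continuous structures: an isometric map preserving all predicates. -/
structure CEmbedding {S : CSig} (M N : CStructure S) where
  toFun : M.Carrier → N.Carrier
  isometry : ∀ x y, dist (toFun x) (toFun y) = dist x y
  map_rel : ∀ i (v : Fin (S.arity i) → M.Carrier), N.rel i (toFun ∘ v) = M.rel i v

/-- An embedding is elementary if it preserves the values of all formulas. -/
def CEmbedding.Elementary {S : CSig} {M N : CStructure S} (f : CEmbedding M N) : Prop :=
  ∀ (n : ℕ) (φ : CFormula S n) (v : Fin n → M.Carrier),
    N.eval n φ (f.toFun ∘ v) = M.eval n φ v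

/-- `T` is model complete: every embedding between models of `T` is elementary. -/
def IsModelComplete {S : CSig} (T : CTheory S) : Prop :=
  ∀ M N : CStructure S, M.SatT T → N.SatT T → ∀ f : CEmbedding M N, f.Elementary

/-- `M` is an existentially closed model of `T`. -/
def IsEC {S : CSig} (T : CTheory S) (M : CStructure S) : Prop :=
  M.SatT T ∧ ∀ N : CStructure S, N.SatT T → ∀ f : CEmbedding M N,
    ∀ (n : ℕ) (φ : CFormula S (n + 1)), IsQF φ → ∀ b : Fin n → M.Carrier,
      N.eval n (CFormula.inf φ) (f.toFun ∘ b) = M.eval n (CFormula.inf φ) b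

/-- `T'` is the model companion of `T`: the models of `T'` are exactly the
existentially closed models of `T`. -/
def IsModelCompanion {S : CSig} (T T' : CTheory S) : Prop :=
  ∀ M : CStructure S, (M.SatT T' ↔ IsEC T M)

/-- `T'` is ℵ₀-categorical: any two separable models of `T'` are isomorphic. -/
def Aleph0Categorical {S : CSig} (T' : CTheory S) : Prop :=
  ∀ M N : CStructure S, M.SatT T' → N.SatT T' →
    TopologicalSpace.SeparableSpace M.Carrier → TopologicalSpace.SeparableSpace N.Carrier →
    ∃ f : CEmbedding M N, Function.Surjective f.toFun

/-! ### The Polish space `𝔖` of codes of separable structures -/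

/-- A point of `𝔖`: a separable continuous `L`-structure presented on a distinguished
countable dense subset indexed by `ℕ` — i.e. the metric and all predicate values on `ℕ`,
subject to the metric axioms and the uniform-continuity moduli. The actual structure is
the completion; since all predicates and the quantifiers are continuous, all the
first-order data is determined by this code. -/
structure SCode (S : CSig) where
  dd : ℕ → ℕ → ℝ
  R : ∀ i, (Fin (S.arity i) → ℕ) → ℝ
  dd_nonneg : ∀ i j, 0 ≤ dd i j
  dd_le_one : ∀ i j, dd i j ≤ 1
  dd_self : ∀ i, dd i i = 0
  dd_pos : ∀ i j, i ≠ j → 0 < dd i j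
  dd_symm : ∀ i j, dd i j = dd j i
  dd_triangle : ∀ i j k, dd i k ≤ dd i j + dd j k
  R_nonneg : ∀ i v, 0 ≤ R i v
  R_le_one : ∀ i v, R i v ≤ 1
  R_uc : ∀ i (ε : ℝ), 0 < ε → ∀ v w,
    (∀ j, dd (v j) (w j) < S.modulus i ε) → |R i v - R i w| ≤ ε

/-- Value of a formula on a code, under an assignment of variables to points of the
distinguished dense subset; quantifiers range over the dense subset (equivalently,
by uniform continuity, over the completion). -/
noncomputable def SCode.eval {S : CSig} (x : SCode S) :
    ∀ (n : ℕ), CFormula S n → (Fin n → ℕ) → ℝ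
  | _, .dst a b, v => x.dd (v a) (v b)
  | _, .rel i ts, v => x.R i fun j => v (ts j)
  | _, .const q, _ => clampQ q
  | n, .fmin φ ψ, v => min (x.eval n φ v) (x.eval n ψ v)
  | n, .fmax φ ψ, v => max (x.eval n φ v) (x.eval n ψ v)
  | n, .neg φ, v => 1 - x.eval n φ v
  | n, .addT φ ψ, v => min 1 (x.eval n φ v + x.eval n ψ v)
  | n, .subT φ ψ, v => max 0 (x.eval n φ v - x.eval n ψ v)
  | n, .absd φ ψ, v => |x.eval n φ v - x.eval n ψ v|
  | n, .scale q φ, v => clampQ q * x.eval n φ v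
  | n, .inf φ, v => ⨅ k : ℕ, x.eval (n + 1) φ (Fin.snoc v k)
  | n, .sup φ, v => ⨆ k : ℕ, x.eval (n + 1) φ (Fin.snoc v k)

/-- The value of a sentence on a code. -/
noncomputable def SCode.sval {S : CSig} (x : SCode S) (φ : CSentence S) : ℝ :=
  x.eval 0 φ (fun i => i.elim0)

/-- The structure coded by `x` satisfies the theory `T`. -/
def SCode.SatT {S : CSig} (x : SCode S) (T : CTheory S) : Prop :=
  ∀ c ∈ T, x.sval c.1 ≤ c.2

/-- The basic open set `U_{φ(ā),ε} = {x ∈ 𝔖 : φ^x(ā) < ε}`. -/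
def basicSet {S : CSig} (n : ℕ) (φ : CFormula S n) (a : Fin n → ℕ) (ε : ℝ) :
    Set (SCode S) :=
  {x | x.eval n φ a < ε}

/-- The topology on `𝔖` generated by the basic open sets `U_{φ(ā),ε}` for `φ`
quantifier-free, `ā` a tuple from the distinguished dense subset and `ε > 0`. -/
instance SCode.topologicalSpace (S : CSig) : TopologicalSpace (SCode S) :=
  TopologicalSpace.generateFrom
    {U | ∃ (n : ℕ) (φ : CFormula S n) (a : Fin n → ℕ) (ε : ℝ),
      IsQF φ ∧ 0 < ε ∧ U = basicSet n φ a ε}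

/-- `x` codes the structure `M`: the distinguished countable dense subset maps to a dense
sequence in `M` realizing exactly the metric and predicate values recorded in `x`
(i.e. `M` is "the completion" of `x`). For a fixed `M`, `{x ∈ 𝔖 : Codes x M}` is
precisely the isomorphism class of `M` in `𝔖`. -/
def Codes {S : CSig} (x : SCode S) (M : CStructure S) : Prop :=
  ∃ u : ℕ → M.Carrier, DenseRange u ∧ (∀ i j, dist (u i) (u j) = x.dd i j) ∧
    ∀ i (v : Fin (S.arity i) → ℕ), M.rel i (u ∘ v) = x.R i v

/-! A code is the atomic diagram of a dense sequence. For a universal theory `T` the atomic diagrams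
of `X`-indexed families in models of `T` form a compact subset of a product of unit intervals,
because `Π₁` axioms pass to substructures and are closed conditions on the diagram. In particular
`𝔖_T`, where the members of the sequence are pairwise distinct, is a `G_δ` in a compact Hausdorff
space and hence a Baire space.

Existential closedness of the structure coded by `y` amounts to countably many conditions: if
`φ(a, x) ≤ r` is solvable in some extension satisfying `T`, then `φ(a, k) < q` for some `k : ℕ`,
where `r < q`. Solvability is closed, being a projection of a compact set, so each condition is
open. It is dense: given a solution `c` in an extension, replace the `m`-th point of the sequence by
`c`. The new sequence codes a substructure of the extension, hence a model of `T`; it satisfies the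
condition as soon as `m` is not among the parameters `a`, and it tends to the old one as `m → ∞`.

By Baire the codes of existentially closed models form a dense `G_δ`, and by categoricity they are
the codes of a single structure. -/

open Filter Function Set Topology

theorem uniformContinuous_ciInf_of_uniformEquicontinuous {ι Y : Type*} [Nonempty ι]
    [PseudoMetricSpace Y] {F : ι → Y → ℝ} (hF : UniformEquicontinuous F)
    (hb : ∀ y, BddBelow (range fun i => F i y)) : UniformContinuous fun y => ⨅ i, F i y := by
  refine Metric.uniformContinuous_iff_le.2 fun ε hε => ?_
  obtain ⟨δ, hδ, hFδ⟩ := Metric.uniformEquicontinuous_iff.1 hF ε hε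
  have le_add : ∀ y z, dist y z < δ → ⨅ i, F i y ≤ (⨅ i, F i z) + ε := by
    intro y z hyz
    rw [← sub_le_iff_le_add]
    refine le_ciInf fun i => ?_
    linarith [ciInf_le (hb y) i, (abs_lt.1 (hFδ y z hyz i)).2]
  refine ⟨δ / 2, half_pos hδ, fun {y z} hyz => abs_sub_le_iff.2 ⟨?_, ?_⟩⟩
  · linarith [le_add y z (by linarith)]
  · linarith [le_add z y (by rw [dist_comm]; linarith)]

theorem uniformContinuous_ciSup_of_uniformEquicontinuous {ι Y : Type*} [Nonempty ι]
    [PseudoMetricSpace Y] {F : ι → Y → ℝ} (hF : UniformEquicontinuous F)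
    (hb : ∀ y, BddAbove (range fun i => F i y)) : UniformContinuous fun y => ⨆ i, F i y := by
  refine Metric.uniformContinuous_iff_le.2 fun ε hε => ?_
  obtain ⟨δ, hδ, hFδ⟩ := Metric.uniformEquicontinuous_iff.1 hF ε hε
  have le_add : ∀ y z, dist y z < δ → ⨆ i, F i y ≤ (⨆ i, F i z) + ε := by
    refine fun y z hyz => ciSup_le fun i => ?_
    linarith [le_ciSup (hb z) i, (abs_lt.1 (hFδ y z hyz i)).2]
  refine ⟨δ / 2, half_pos hδ, fun {y z} hyz => abs_sub_le_iff.2 ⟨?_, ?_⟩⟩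
  · linarith [le_add y z (by linarith)]
  · linarith [le_add z y (by rw [dist_comm]; linarith)]

theorem ciInf_comp_of_denseRange {ι Y : Type*} [TopologicalSpace Y] {u : ι → Y}
    (hu : DenseRange u) {f : Y → ℝ} (hf : Continuous f) : ⨅ i, f (u i) = ⨅ y, f y := by
  rw [← Dense.ciInf' hu hf, iInf_range']

theorem ciSup_comp_of_denseRange {ι Y : Type*} [TopologicalSpace Y] {u : ι → Y}
    (hu : DenseRange u) {f : Y → ℝ} (hf : Continuous f) : ⨆ i, f (u i) = ⨆ y, f y := by
  rw [← Dense.ciSup' hu hf, iSup_range']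

theorem injective_update_of_forall_ne {ι Y : Type*} [DecidableEq ι] {w : ι → Y}
    (hw : Injective w) {c : Y} (hc : ∀ i, w i ≠ c) (m : ι) : Injective (update w m c) := by
  intro i j hij
  grind [update_apply, hw.eq_iff]

theorem tendsto_update_atTop {Y : Type*} [TopologicalSpace Y] (w : ℕ → Y) (c : Y) :
    Tendsto (fun m => update w m c) atTop (𝓝 w) := by
  refine tendsto_pi_nhds.2 fun i => tendsto_const_nhds.congr' ?_
  filter_upwards [eventually_ne_atTop i] with m hm
  exact (update_of_ne hm.symm c w).symm

theorem uniformEquicontinuous_comp_finSnoc {X : Type*} [PseudoMetricSpace X] {n : ℕ}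
    {F : (Fin (n + 1) → X) → ℝ} (hF : UniformContinuous F) :
    UniformEquicontinuous fun (x : X) (v : Fin n → X) => F (Fin.snoc v x) := by
  refine Metric.uniformEquicontinuous_iff.2 fun ε hε => ?_
  obtain ⟨δ, hδ, hFδ⟩ := Metric.uniformContinuous_iff.1 hF ε hε
  refine ⟨δ, hδ, fun v w hvw x => hFδ (lt_of_le_of_lt ?_ hvw)⟩
  refine (dist_pi_le_iff dist_nonneg).2 fun i => ?_
  induction i using Fin.lastCases with
  | last => simp
  | cast i => simpa using dist_le_pi_dist v w i

/-- `R` is uniformly continuous with modulus `m` with respect to the distance function `d`, in the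
form required of predicate symbols by `CStructure` and `SCode`. -/
def HasModulus {ι X : Type*} (d : X → X → ℝ) (m : ℝ → ℝ) (R : (ι → X) → ℝ) : Prop :=
  ∀ ε : ℝ, 0 < ε → ∀ v w, (∀ j, d (v j) (w j) < m ε) → |R v - R w| ≤ ε

theorem HasModulus.uniformContinuous {ι X : Type*} [Finite ι] [PseudoMetricSpace X]
    {m : ℝ → ℝ} {R : (ι → X) → ℝ} (hR : HasModulus dist m R) (hm : ∀ ε, 0 < ε → 0 < m ε) :
    UniformContinuous R := by
  cases nonempty_fintype ι
  refine Metric.uniformContinuous_iff.2 fun ε hε => ⟨m (ε / 2), hm _ (half_pos hε), ?_⟩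
  intro v w hvw
  have hle := hR _ (half_pos hε) v w ((dist_pi_lt_iff (hm _ (half_pos hε))).1 hvw)
  exact hle.trans_lt (half_lt_self hε)

theorem HasModulus.exists_extension {ι X Y : Type*} [Finite ι] [PseudoMetricSpace X]
    [PseudoMetricSpace Y] {u : X → Y} (hu : DenseRange u) (hi : Isometry u) {m : ℝ → ℝ}
    (hm : ∀ ε, 0 < ε → 0 < m ε) {R : (ι → X) → ℝ} (hR : HasModulus dist m R)
    (hR01 : ∀ v, R v ∈ Icc 0 1) :
    ∃ g : (ι → Y) → ℝ, (∀ v, g (u ∘ v) = R v) ∧ (∀ v, g v ∈ Icc 0 1) ∧ HasModulus dist m g := by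
  cases nonempty_fintype ι
  have hd : DenseRange fun v : ι → X => u ∘ v := DenseRange.piMap fun _ => hu
  have hind : IsUniformInducing fun v : ι → X => u ∘ v :=
    (Isometry.piMap (fun _ : ι => u) fun _ => hi).isUniformInducing
  have hRc := hR.uniformContinuous hm
  obtain ⟨g, hgc, hgu⟩ : ∃ g : (ι → Y) → ℝ, Continuous g ∧ ∀ v, g (u ∘ v) = R v :=
    ⟨_, (uniformContinuous_uniformly_extend hind hd hRc).continuous,
      uniformly_extend_of_ind hind hd hRc⟩
  refine ⟨g, hgu, fun v => hd.induction_on (p := fun v => g v ∈ Icc 0 1) v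
    (isClosed_Icc.preimage hgc) fun a => (hgu a).symm ▸ hR01 a, fun ε hε v w => ?_⟩
  refine hd.induction_on₂ (p := fun v w => (∀ j, dist (v j) (w j) < m ε) → |g v - g w| ≤ ε)
    ?_ (fun a b hab => ?_) v w
  · refine isClosed_imp ?_ (isClosed_le (by fun_prop) continuous_const)
    simp only [ofPred_forall]
    exact isOpen_iInter_of_finite fun j => isOpen_lt (by fun_prop) continuous_const
  · rw [hgu, hgu]
    exact hR ε hε a b fun j => by simpa only [comp_apply, hi.dist_eq] using hab j

theorem exists_isometry_comp_eq {X Y Z : Type*} [PseudoMetricSpace Y] [MetricSpace Z]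
    [CompleteSpace Z] {u : X → Y} (hu : DenseRange u) {g : X → Z}
    (hg : ∀ a b, dist (g a) (g b) = dist (u a) (u b)) :
    ∃ f : Y → Z, Isometry f ∧ f ∘ u = g := by
  let _ : PseudoMetricSpace X := PseudoMetricSpace.induced u inferInstance
  have hui : IsUniformInducing u := ⟨rfl⟩
  have hgc : UniformContinuous g := (Isometry.of_dist_eq hg).uniformContinuous
  obtain ⟨f, hfc, hfu⟩ : ∃ f : Y → Z, Continuous f ∧ ∀ a, f (u a) = g a :=
    ⟨_, (uniformContinuous_uniformly_extend hui hu hgc).continuous,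
      uniformly_extend_of_ind hui hu hgc⟩
  refine ⟨f, Isometry.of_dist_eq fun x y => ?_, funext hfu⟩
  exact hu.induction_on₂ (p := fun x y => dist (f x) (f y) = dist x y)
    (isClosed_eq (by fun_prop) (by fun_prop)) (fun a b => by rw [hfu, hfu, hg]) x y

namespace CFormula

variable {S : CSig}

/-- A numbering of the formulas, used to show that there are only countably many. -/
noncomputable def code : ∀ {n : ℕ}, CFormula S n → ℕ
  | _, .dst a b => Nat.pair 0 (Nat.pair a b)
  | _, .rel i ts => Nat.pair 1 (Nat.pair i (Encodable.encode ts))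
  | _, .const q => Nat.pair 2 (Encodable.encode q)
  | _, .fmin φ ψ => Nat.pair 3 (Nat.pair φ.code ψ.code)
  | _, .fmax φ ψ => Nat.pair 4 (Nat.pair φ.code ψ.code)
  | _, .neg φ => Nat.pair 5 φ.code
  | _, .addT φ ψ => Nat.pair 6 (Nat.pair φ.code ψ.code)
  | _, .subT φ ψ => Nat.pair 7 (Nat.pair φ.code ψ.code)
  | _, .absd φ ψ => Nat.pair 8 (Nat.pair φ.code ψ.code)
  | _, .scale q φ => Nat.pair 9 (Nat.pair (Encodable.encode q) φ.code)
  | _, .inf φ => Nat.pair 10 φ.code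
  | _, .sup φ => Nat.pair 11 φ.code

theorem code_injective {n : ℕ} : Injective (code : CFormula S n → ℕ) := by
  intro φ
  induction φ with
  | rel i ts =>
    intro ψ h
    cases ψ with
    | rel j us =>
      simp only [code, Nat.pair_eq_pair, true_and] at h
      obtain ⟨rfl, h⟩ := h
      rw [Encodable.encode_injective h]
    | _ => simp [code, Nat.pair_eq_pair] at h
  | _ =>
    intro ψ h
    cases ψ <;> simp only [code, Nat.pair_eq_pair] at h <;>
      grind [Fin.ext_iff, Encodable.encode_inj]

instance (n : ℕ) : Countable (CFormula S n) := code_injective.countable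

end CFormula

/-- Values for the distance and for the predicate symbols on a set `X`. Structures and codes both
give rise to atomic diagrams, and in the product topology every space of atomic diagrams with
values in `[0, 1]` is compact. -/
abbrev AtomicDiagram (S : CSig) (X : Type*) : Type _ :=
  (X → X → ℝ) × (∀ i, (Fin (S.arity i) → X) → ℝ)

namespace AtomicDiagram

variable {S : CSig} {X Y : Type*} {n : ℕ}

/-- The value of a formula at a tuple from `X`, with quantifiers ranging over `X`; this is the
common generalization of `CStructure.eval` and `SCode.eval`. -/
noncomputable def eval (D : AtomicDiagram S X) : ∀ {n : ℕ}, CFormula S n → (Fin n → X) → ℝ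
  | _, .dst a b, v => D.1 (v a) (v b)
  | _, .rel i ts, v => D.2 i fun j => v (ts j)
  | _, .const q, _ => clampQ q
  | _, .fmin φ ψ, v => min (D.eval φ v) (D.eval ψ v)
  | _, .fmax φ ψ, v => max (D.eval φ v) (D.eval ψ v)
  | _, .neg φ, v => 1 - D.eval φ v
  | _, .addT φ ψ, v => min 1 (D.eval φ v + D.eval ψ v)
  | _, .subT φ ψ, v => max 0 (D.eval φ v - D.eval ψ v)
  | _, .absd φ ψ, v => |D.eval φ v - D.eval ψ v|
  | _, .scale q φ, v => clampQ q * D.eval φ v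
  | _, .inf φ, v => ⨅ x, D.eval φ (Fin.snoc v x)
  | _, .sup φ, v => ⨆ x, D.eval φ (Fin.snoc v x)

/-- The diagram induced on `X` by a map `u : X → Y` into the domain of a diagram, i.e. the atomic
diagram of the family `u`. -/
def comap (D : AtomicDiagram S Y) (u : X → Y) : AtomicDiagram S X :=
  (fun x y => D.1 (u x) (u y), fun i v => D.2 i (u ∘ v))

theorem continuous_comap (u : X → Y) :
    Continuous fun D : AtomicDiagram S Y => D.comap u := by
  unfold comap
  fun_prop

theorem eval_comap_of_isQF (D : AtomicDiagram S Y) (u : X → Y) {φ : CFormula S n} (hφ : IsQF φ)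
    (v : Fin n → X) : (D.comap u).eval φ v = D.eval φ (u ∘ v) := by
  induction hφ with
  | dst | rel | const => rfl
  | fmin _ _ ih₁ ih₂ | fmax _ _ ih₁ ih₂ | addT _ _ ih₁ ih₂ | subT _ _ ih₁ ih₂
  | absd _ _ ih₁ ih₂ => simp only [eval, ih₁, ih₂]
  | neg _ ih | scale _ _ ih => simp only [eval, ih]

theorem continuous_eval_of_isQF {φ : CFormula S n} (hφ : IsQF φ) (v : Fin n → X) :
    Continuous fun D : AtomicDiagram S X => D.eval φ v := by
  induction hφ with
  | dst | rel | const => simp only [eval]; fun_prop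
  | fmin _ _ ih₁ ih₂ | fmax _ _ ih₁ ih₂ | addT _ _ ih₁ ih₂ | subT _ _ ih₁ ih₂
  | absd _ _ ih₁ ih₂ => simp only [eval]; fun_prop
  | neg _ ih | scale _ _ ih => simp only [eval]; fun_prop

/-- The diagram satisfies the axioms of a continuous structure, except that distinct points may
have distance `0` and that the space need not be complete. -/
structure IsPrestructure (D : AtomicDiagram S X) : Prop where
  dist_mem_Icc : ∀ x y, D.1 x y ∈ Icc 0 1
  dist_self : ∀ x, D.1 x x = 0
  dist_comm : ∀ x y, D.1 x y = D.1 y x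
  dist_triangle : ∀ x y z, D.1 x z ≤ D.1 x y + D.1 y z
  rel_mem_Icc : ∀ i v, D.2 i v ∈ Icc 0 1
  rel_hasModulus : ∀ i, HasModulus D.1 (S.modulus i) (D.2 i)

namespace IsPrestructure

theorem comap {D : AtomicDiagram S Y} (hD : D.IsPrestructure) (u : X → Y) :
    (D.comap u).IsPrestructure where
  dist_mem_Icc _ _ := hD.dist_mem_Icc _ _
  dist_self _ := hD.dist_self _
  dist_comm _ _ := hD.dist_comm _ _
  dist_triangle _ _ _ := hD.dist_triangle _ _ _
  rel_mem_Icc _ _ := hD.rel_mem_Icc _ _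
  rel_hasModulus i ε hε v w := hD.rel_hasModulus i ε hε (u ∘ v) (u ∘ w)

theorem eval_mem_Icc {D : AtomicDiagram S X} (hD : D.IsPrestructure) (φ : CFormula S n)
    (v : Fin n → X) : D.eval φ v ∈ Icc 0 1 := by
  have clampQ_mem (q : ℚ) : clampQ q ∈ Icc 0 1 :=
    ⟨le_max_left _ _, max_le zero_le_one (min_le_left _ _)⟩
  induction φ with
  | dst => exact hD.dist_mem_Icc _ _
  | rel => exact hD.rel_mem_Icc _ _
  | const q => exact clampQ_mem q
  | fmin φ ψ ih₁ ih₂ | fmax φ ψ ih₁ ih₂ | addT φ ψ ih₁ ih₂ | subT φ ψ ih₁ ih₂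
  | absd φ ψ ih₁ ih₂ =>
    have := ih₁ v
    have := ih₂ v
    simp only [eval, mem_Icc] at *
    grind
  | neg φ ih =>
    have := ih v
    simp only [eval, mem_Icc] at *
    grind
  | scale q φ ih => exact unitInterval.mul_mem (clampQ_mem q) (ih v)
  | inf φ ih =>
    refine ⟨Real.iInf_nonneg fun x => (ih _).1, ?_⟩
    rcases isEmpty_or_nonempty X with _ | ⟨⟨x⟩⟩
    · simp [eval, Real.iInf_of_isEmpty]
    · exact ciInf_le_of_le ⟨0, forall_mem_range.2 fun x => (ih _).1⟩ x (ih _).2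
  | sup φ ih =>
    exact ⟨Real.iSup_nonneg fun x => (ih _).1, Real.iSup_le (fun x => (ih _).2) zero_le_one⟩

theorem bddBelow_range_eval {D : AtomicDiagram S X} (hD : D.IsPrestructure) {ι : Sort*}
    (φ : CFormula S n) (v : ι → Fin n → X) : BddBelow (range fun i => D.eval φ (v i)) :=
  ⟨0, forall_mem_range.2 fun _ => (hD.eval_mem_Icc φ _).1⟩

theorem bddAbove_range_eval {D : AtomicDiagram S X} (hD : D.IsPrestructure) {ι : Sort*}
    (φ : CFormula S n) (v : ι → Fin n → X) : BddAbove (range fun i => D.eval φ (v i)) :=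
  ⟨1, forall_mem_range.2 fun _ => (hD.eval_mem_Icc φ _).2⟩

theorem eval_comap_le_of_isPiN_one {D : AtomicDiagram S Y} (hD : D.IsPrestructure) (u : X → Y)
    {φ : CFormula S n} (hφ : IsPiN S 1 φ) (v : Fin n → X) :
    (D.comap u).eval φ v ≤ D.eval φ (u ∘ v) := by
  induction hφ with
  | base hφ => exact (eval_comap_of_isQF D u hφ v).le
  | step _ ih =>
    refine Real.iSup_le (fun x => ?_) (hD.eval_mem_Icc _ _).1
    refine (ih _).trans ?_
    rw [Fin.comp_snoc]
    exact le_ciSup (hD.bddAbove_range_eval _ _) (u x)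

end IsPrestructure

theorem isClosed_setOfPred_hasModulus (i : ℕ) :
    IsClosed {D : AtomicDiagram S X | HasModulus D.1 (S.modulus i) (D.2 i)} := by
  simp only [HasModulus, ofPred_forall]
  refine isClosed_iInter fun ε => isClosed_iInter fun _ => isClosed_iInter fun v =>
    isClosed_iInter fun w => isClosed_imp ?_ (isClosed_le (by fun_prop) (by fun_prop))
  simp only [ofPred_forall]
  exact isOpen_iInter_of_finite fun j => isOpen_lt (by fun_prop) (by fun_prop)

theorem isClosed_setOfPred_isPrestructure :
    IsClosed {D : AtomicDiagram S X | D.IsPrestructure} := by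
  have hsetOf : {D : AtomicDiagram S X | D.IsPrestructure} =
      {D | (∀ x y, D.1 x y ∈ Icc 0 1) ∧ (∀ x, D.1 x x = 0) ∧ (∀ x y, D.1 x y = D.1 y x) ∧
        (∀ x y z, D.1 x z ≤ D.1 x y + D.1 y z) ∧ (∀ i v, D.2 i v ∈ Icc 0 1) ∧
        ∀ i, HasModulus D.1 (S.modulus i) (D.2 i)} :=
    Set.ext fun D => ⟨fun ⟨h₁, h₂, h₃, h₄, h₅, h₆⟩ => ⟨h₁, h₂, h₃, h₄, h₅, h₆⟩,
      fun ⟨h₁, h₂, h₃, h₄, h₅, h₆⟩ => ⟨h₁, h₂, h₃, h₄, h₅, h₆⟩⟩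
  rw [hsetOf]
  simp only [ofPred_and, ofPred_forall]
  refine IsClosed.inter ?_ <| IsClosed.inter ?_ <| IsClosed.inter ?_ <| IsClosed.inter ?_ <|
    IsClosed.inter ?_ <| isClosed_iInter isClosed_setOfPred_hasModulus
  · exact isClosed_iInter fun x => isClosed_iInter fun y => isClosed_Icc.preimage (by fun_prop)
  · exact isClosed_iInter fun x => isClosed_eq (by fun_prop) continuous_const
  · exact isClosed_iInter fun x => isClosed_iInter fun y =>
      isClosed_eq (by fun_prop) (by fun_prop)
  · exact isClosed_iInter fun x => isClosed_iInter fun y => isClosed_iInter fun z =>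
      isClosed_le (by fun_prop) (by fun_prop)
  · exact isClosed_iInter fun i => isClosed_iInter fun v => isClosed_Icc.preimage (by fun_prop)

theorem isCompact_setOfPred_isPrestructure :
    IsCompact {D : AtomicDiagram S X | D.IsPrestructure} := by
  have hbox : IsCompact ((univ.pi fun _ : X => univ.pi fun _ : X => Icc (0 : ℝ) 1) ×ˢ
      (univ.pi fun i => univ.pi fun _ : Fin (S.arity i) → X => Icc (0 : ℝ) 1)) :=
    (isCompact_univ_pi fun _ => isCompact_univ_pi fun _ => isCompact_Icc).prod
      (isCompact_univ_pi fun _ => isCompact_univ_pi fun _ => isCompact_Icc)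
  refine hbox.of_isClosed_subset isClosed_setOfPred_isPrestructure fun D hD => ?_
  exact ⟨fun x _ y _ => hD.dist_mem_Icc x y, fun i _ v _ => hD.rel_mem_Icc i v⟩

theorem isClosed_setOfPred_eval_le_of_isPiN_one [Nonempty X] {φ : CFormula S n} (hφ : IsPiN S 1 φ)
    (v : Fin n → X) (c : ℝ) :
    IsClosed {D : AtomicDiagram S X | D.IsPrestructure ∧ D.eval φ v ≤ c} := by
  induction hφ with
  | base hφ =>
    exact isClosed_setOfPred_isPrestructure.inter
      (isClosed_le (continuous_eval_of_isQF hφ v) continuous_const)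
  | @step n φ _ ih =>
    have hiInter : {D : AtomicDiagram S X | D.IsPrestructure ∧ D.eval φ.sup v ≤ c} =
        ⋂ x, {D | D.IsPrestructure ∧ D.eval φ (Fin.snoc v x) ≤ c} := by
      ext D
      simp only [mem_ofPred_eq, mem_iInter, forall_and, forall_const]
      exact and_congr_right fun hD => ciSup_le_iff (hD.bddAbove_range_eval _ _)
    rw [hiInter]
    exact isClosed_iInter fun x => ih _

end AtomicDiagram

namespace CStructure

variable {S : CSig} {X : Type*} {n : ℕ}

/-- The atomic diagram of a structure, on its own carrier. -/
def diagram (M : CStructure S) : AtomicDiagram S M.Carrier :=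
  (dist, M.rel)

theorem eval_diagram (M : CStructure S) (φ : CFormula S n) (v : Fin n → M.Carrier) :
    M.diagram.eval φ v = M.eval n φ v := by
  induction φ <;> simp only [AtomicDiagram.eval, eval, *] <;> rfl

theorem sval_eq_eval_diagram (M : CStructure S) (φ : CSentence S) (v : Fin 0 → M.Carrier) :
    M.sval φ = M.diagram.eval φ v := by
  rw [sval, eval_diagram, Subsingleton.elim v]

theorem isPrestructure_diagram (M : CStructure S) : M.diagram.IsPrestructure where
  dist_mem_Icc x y := ⟨dist_nonneg, M.bounded x y⟩
  dist_self := dist_self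
  dist_comm := dist_comm
  dist_triangle := dist_triangle
  rel_mem_Icc i v := ⟨M.rel_nonneg i v, M.rel_le_one i v⟩
  rel_hasModulus := M.rel_uc

theorem continuous_rel (M : CStructure S) (i : ℕ) : Continuous (M.rel i) :=
  (HasModulus.uniformContinuous (M.rel_uc i) (S.modulus_pos i)).continuous

theorem uniformContinuous_eval_diagram (M : CStructure S) (φ : CFormula S n) :
    UniformContinuous (M.diagram.eval φ) := by
  induction φ with
  | dst a b =>
    exact (Pi.uniformContinuous_proj (fun _ => M.Carrier) a).dist
      (Pi.uniformContinuous_proj (fun _ => M.Carrier) b)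
  | rel i ts =>
    exact (HasModulus.uniformContinuous (M.rel_uc i) (S.modulus_pos i)).comp
      (uniformContinuous_pi.2 fun j => Pi.uniformContinuous_proj _ (ts j))
  | const q => exact uniformContinuous_const
  | fmin φ ψ ih₁ ih₂ => exact lipschitzWith_min.uniformContinuous.comp (ih₁.prodMk ih₂)
  | fmax φ ψ ih₁ ih₂ => exact lipschitzWith_max.uniformContinuous.comp (ih₁.prodMk ih₂)
  | addT φ ψ ih₁ ih₂ =>
    exact lipschitzWith_min.uniformContinuous.comp (uniformContinuous_const.prodMk (ih₁.add ih₂))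
  | subT φ ψ ih₁ ih₂ =>
    exact lipschitzWith_max.uniformContinuous.comp (uniformContinuous_const.prodMk (ih₁.sub ih₂))
  | absd φ ψ ih₁ ih₂ => exact Real.uniformContinuous_abs.comp (ih₁.sub ih₂)
  | neg φ ih => exact uniformContinuous_const.sub ih
  | scale q φ ih => exact ih.const_mul' _
  | inf φ ih =>
    exact uniformContinuous_ciInf_of_uniformEquicontinuous (uniformEquicontinuous_comp_finSnoc ih)
      fun v => M.isPrestructure_diagram.bddBelow_range_eval φ fun x => Fin.snoc v x
  | sup φ ih =>
    exact uniformContinuous_ciSup_of_uniformEquicontinuous (uniformEquicontinuous_comp_finSnoc ih)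
      fun v => M.isPrestructure_diagram.bddAbove_range_eval φ fun x => Fin.snoc v x

theorem continuous_eval (M : CStructure S) (φ : CFormula S n) : Continuous (M.eval n φ) := by
  simpa only [funext (M.eval_diagram φ)] using! (M.uniformContinuous_eval_diagram φ).continuous

theorem eval_comap_diagram_of_denseRange (M : CStructure S) {u : X → M.Carrier}
    (hu : DenseRange u) (φ : CFormula S n) (v : Fin n → X) :
    (M.diagram.comap u).eval φ v = M.diagram.eval φ (u ∘ v) := by
  have hc {m : ℕ} (φ : CFormula S m) : Continuous (M.diagram.eval φ) :=
    (M.uniformContinuous_eval_diagram φ).continuous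
  induction φ with
  | dst | rel | const => rfl
  | inf φ ih =>
    simp only [AtomicDiagram.eval, ih, Fin.comp_snoc]
    exact ciInf_comp_of_denseRange hu
      (f := fun y => M.diagram.eval φ (Fin.snoc (u ∘ v) y)) ((hc φ).comp (by fun_prop))
  | sup φ ih =>
    simp only [AtomicDiagram.eval, ih, Fin.comp_snoc]
    exact ciSup_comp_of_denseRange hu
      (f := fun y => M.diagram.eval φ (Fin.snoc (u ∘ v) y)) ((hc φ).comp (by fun_prop))
  | _ => simp only [AtomicDiagram.eval, *]

theorem continuous_comap_diagram (M : CStructure S) :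
    Continuous fun u : X → M.Carrier => M.diagram.comap u := by
  have := M.continuous_rel
  unfold diagram AtomicDiagram.comap
  fun_prop

end CStructure

theorem AtomicDiagram.IsPrestructure.exists_completion {S : CSig} {X : Type} [Nonempty X]
    {D : AtomicDiagram S X} (hD : D.IsPrestructure) :
    ∃ (N : CStructure S) (u : X → N.Carrier), DenseRange u ∧ N.diagram.comap u = D := by
  let _ : PseudoMetricSpace X :=
    { dist := D.1
      dist_self := hD.dist_self
      dist_comm := hD.dist_comm
      dist_triangle := hD.dist_triangle }
  have hdense := UniformSpace.Completion.denseRange_coe (α := X)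
  have hiso := UniformSpace.Completion.coe_isometry (α := X)
  choose rel hrel hrel01 hrelm using fun i =>
    HasModulus.exists_extension hdense hiso (S.modulus_pos i) (hD.rel_hasModulus i)
      (hD.rel_mem_Icc i)
  let N : CStructure S :=
    { Carrier := UniformSpace.Completion X
      metric := inferInstance
      nonempty := .map (↑) ‹Nonempty X›
      complete := inferInstance
      bounded := fun x y => hdense.induction_on₂ (p := fun x y => dist x y ≤ 1)
        (isClosed_le (by fun_prop) continuous_const)
        (fun a b => (hiso.dist_eq a b).trans_le (hD.dist_mem_Icc a b).2) x y
      rel := rel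
      rel_nonneg := fun i v => (hrel01 i v).1
      rel_le_one := fun i v => (hrel01 i v).2
      rel_uc := hrelm }
  exact ⟨N, (↑), hdense, Prod.ext (funext₂ hiso.dist_eq) (funext₂ hrel)⟩

namespace CEmbedding

variable {S : CSig} {M N : CStructure S}

theorem continuous (f : CEmbedding M N) : Continuous f.toFun :=
  (Isometry.of_dist_eq f.isometry).continuous

theorem comap_diagram (f : CEmbedding M N) : N.diagram.comap f.toFun = M.diagram :=
  Prod.ext (funext₂ f.isometry) (funext₂ f.map_rel)

theorem eval_inf_le_of_isQF (f : CEmbedding M N) {n : ℕ} {φ : CFormula S (n + 1)} (hφ : IsQF φ)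
    (b : Fin n → M.Carrier) : N.eval n φ.inf (f.toFun ∘ b) ≤ M.eval n φ.inf b := by
  simp only [← CStructure.eval_diagram]
  refine le_ciInf fun x => ?_
  rw [← f.comap_diagram, AtomicDiagram.eval_comap_of_isQF _ _ hφ, Fin.comp_snoc]
  exact ciInf_le (N.isPrestructure_diagram.bddBelow_range_eval φ _) (f.toFun x)

theorem exists_comp_eq {X : Type*} {u : X → M.Carrier} (hu : DenseRange u) {g : X → N.Carrier}
    (h : N.diagram.comap g = M.diagram.comap u) : ∃ f : CEmbedding M N, f.toFun ∘ u = g := by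
  obtain ⟨f, hf, hfu⟩ := exists_isometry_comp_eq hu (congr_fun₂ (congr_arg Prod.fst h))
  refine ⟨⟨f, hf.dist_eq, fun i => ?_⟩, hfu⟩
  have hdense : DenseRange fun v : Fin (S.arity i) → X => u ∘ v := DenseRange.piMap fun _ => hu
  have hcont : Continuous fun v : Fin (S.arity i) → M.Carrier => N.rel i (f ∘ v) :=
    (N.continuous_rel i).comp (Continuous.piMap fun _ => hf.continuous)
  refine congr_fun (hdense.equalizer hcont (M.continuous_rel i) (funext fun v => ?_))
  subst hfu
  exact congr_fun₂ (congr_arg Prod.snd h) i v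

end CEmbedding

namespace CTheory

variable {S : CSig} {T : CTheory S} {n : ℕ}

/-- The atomic diagrams of `X`-indexed families in models of `T`. -/
def diagrams (T : CTheory S) (X : Type*) : Set (AtomicDiagram S X) :=
  {D | ∃ (N : CStructure S) (u : X → N.Carrier), N.SatT T ∧ N.diagram.comap u = D}

theorem exists_isPiN_one_satT_iff (hU : IsUniversalTheory T) :
    ∃ A : Set (CSentence S), (∀ ψ ∈ A, IsPiN S 1 ψ) ∧
      ∀ N : CStructure S, N.SatT T ↔ ∀ ψ ∈ A, N.sval ψ ≤ 0 := by
  obtain ⟨A, hA, hAT⟩ := hU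
  refine ⟨A, hA, fun N => (hAT N).trans (forall₂_congr fun ψ _ => ?_)⟩
  rw [N.sval_eq_eval_diagram ψ Fin.elim0]
  exact ⟨Eq.le, fun h => h.antisymm (N.isPrestructure_diagram.eval_mem_Icc ψ _).1⟩

theorem exists_isPiN_one_diagrams_eq (hU : IsUniversalTheory T) :
    ∃ A : Set (CSentence S), (∀ ψ ∈ A, IsPiN S 1 ψ) ∧
      ∀ (X : Type) [Nonempty X],
        T.diagrams X = {D | D.IsPrestructure ∧ ∀ ψ ∈ A, D.eval ψ Fin.elim0 ≤ 0} := by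
  obtain ⟨A, hA, hAT⟩ := exists_isPiN_one_satT_iff hU
  refine ⟨A, hA, fun X _ => Subset.antisymm ?_ ?_⟩
  · rintro _ ⟨N, u, hN, rfl⟩
    refine ⟨N.isPrestructure_diagram.comap u, fun ψ hψ => ?_⟩
    refine (N.isPrestructure_diagram.eval_comap_le_of_isPiN_one u (hA ψ hψ) _).trans ?_
    exact (N.sval_eq_eval_diagram ψ _).symm.trans_le ((hAT N).1 hN ψ hψ)
  · rintro D ⟨hD, hDA⟩
    obtain ⟨N, u, hu, rfl⟩ := hD.exists_completion
    refine ⟨N, u, (hAT N).2 fun ψ hψ => ?_, rfl⟩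
    rw [N.sval_eq_eval_diagram ψ (u ∘ Fin.elim0), ← N.eval_comap_diagram_of_denseRange hu]
    exact hDA ψ hψ

theorem isCompact_diagrams (hU : IsUniversalTheory T) (X : Type) [Nonempty X] :
    IsCompact (T.diagrams X) := by
  obtain ⟨A, hA, hAT⟩ := exists_isPiN_one_diagrams_eq hU
  have hinter : T.diagrams X = {D | D.IsPrestructure} ∩
      ⋂ ψ ∈ A, {D | D.IsPrestructure ∧ D.eval ψ Fin.elim0 ≤ 0} := by
    ext D
    simp only [hAT, mem_inter_iff, mem_iInter, mem_ofPred_eq]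
    grind
  rw [hinter]
  exact AtomicDiagram.isCompact_setOfPred_isPrestructure.inter_right <|
    isClosed_biInter fun ψ hψ =>
      AtomicDiagram.isClosed_setOfPred_eval_le_of_isPiN_one (hA ψ hψ) Fin.elim0 0

theorem satT_of_comap_mem_diagrams (hU : IsUniversalTheory T) {N : CStructure S} {X : Type*}
    {u : X → N.Carrier} (hu : DenseRange u) (h : N.diagram.comap u ∈ T.diagrams X) :
    N.SatT T := by
  obtain ⟨A, hA, hAT⟩ := exists_isPiN_one_satT_iff hU
  obtain ⟨N', u', hN', huu'⟩ := h
  obtain ⟨f, -⟩ := CEmbedding.exists_comp_eq hu huu'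
  refine (hAT N).2 fun ψ hψ => ?_
  rw [N.sval_eq_eval_diagram ψ Fin.elim0, ← f.comap_diagram]
  refine (N'.isPrestructure_diagram.eval_comap_le_of_isPiN_one _ (hA ψ hψ) _).trans ?_
  exact (N'.sval_eq_eval_diagram ψ _).symm.trans_le ((hAT N').1 hN' ψ hψ)

/-- The diagrams `D` of families in models of `T` in which the condition `φ(a, x) ≤ r` has a
solution `x`. Here `x` is any element of the model, so this asks for a solution in some extension
of the structure described by `D`. -/
def solvable (T : CTheory S) {X : Type*} (φ : CFormula S (n + 1)) (a : Fin n → X) (r : ℝ) :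
    Set (AtomicDiagram S X) :=
  {D | ∃ (N : CStructure S) (w : X → N.Carrier), N.SatT T ∧ N.diagram.comap w = D ∧
    ∃ c, N.diagram.eval φ (Fin.snoc (w ∘ a) c) ≤ r}

theorem solvable_eq_image_comap {X : Type*} {φ : CFormula S (n + 1)} (hφ : IsQF φ)
    (a : Fin n → X) (r : ℝ) :
    T.solvable φ a r = (fun E : AtomicDiagram S (Option X) => E.comap some) ''
      (T.diagrams (Option X) ∩ {E | E.eval φ (Fin.snoc (some ∘ a) none) ≤ r}) := by
  ext D
  constructor
  · rintro ⟨N, w, hN, rfl, c, hc⟩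
    refine ⟨N.diagram.comap fun o => o.elim c w, ⟨⟨N, _, hN, rfl⟩, ?_⟩, rfl⟩
    rw [mem_ofPred_eq, AtomicDiagram.eval_comap_of_isQF _ _ hφ, Fin.comp_snoc]
    exact hc
  · rintro ⟨_, ⟨⟨N, u, hN, rfl⟩, hr⟩, rfl⟩
    refine ⟨N, u ∘ some, hN, rfl, u none, ?_⟩
    rwa [mem_ofPred_eq, AtomicDiagram.eval_comap_of_isQF _ _ hφ, Fin.comp_snoc] at hr

theorem isClosed_solvable (hU : IsUniversalTheory T) {X : Type} {φ : CFormula S (n + 1)}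
    (hφ : IsQF φ) (a : Fin n → X) (r : ℝ) : IsClosed (T.solvable φ a r) := by
  rw [solvable_eq_image_comap hφ]
  have hclosed :
      IsClosed {E : AtomicDiagram S (Option X) | E.eval φ (Fin.snoc (some ∘ a) none) ≤ r} :=
    isClosed_le (AtomicDiagram.continuous_eval_of_isQF hφ _) continuous_const
  exact (((isCompact_diagrams hU (Option X)).inter_right hclosed).image
    (AtomicDiagram.continuous_comap some)).isClosed

/-- The diagrams satisfying one instance of existential closedness: if `φ(a, x) ≤ r` is solvable
in the sense of `solvable`, then some `k : X` already satisfies `φ(a, k) < q`. -/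
def ecConstraint (T : CTheory S) {X : Type*} (φ : CFormula S (n + 1)) (a : Fin n → X)
    (r q : ℝ) : Set (AtomicDiagram S X) :=
  {D | D ∈ T.solvable φ a r → ∃ k, D.eval φ (Fin.snoc a k) < q}

theorem isOpen_ecConstraint (hU : IsUniversalTheory T) {X : Type} {φ : CFormula S (n + 1)}
    (hφ : IsQF φ) (a : Fin n → X) (r q : ℝ) : IsOpen (T.ecConstraint φ a r q) := by
  simp only [ecConstraint, imp_iff_not_or, ofPred_or, ofPred_exists]
  refine (isClosed_solvable hU hφ a r).isOpen_compl.union (isOpen_iUnion fun k => ?_)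
  exact isOpen_lt (AtomicDiagram.continuous_eval_of_isQF hφ _) continuous_const

end CTheory

section ExistentiallyClosed

variable {S : CSig} {T : CTheory S} {M : CStructure S} {X : Type*} {n : ℕ}
  {u : X → M.Carrier}

theorem IsEC.comap_diagram_mem_ecConstraint (hM : IsEC T M) (hu : DenseRange u)
    {φ : CFormula S (n + 1)} (hφ : IsQF φ) (a : Fin n → X) {r q : ℝ} (hrq : r < q) :
    M.diagram.comap u ∈ T.ecConstraint φ a r q := by
  rintro ⟨N, w, hN, hw, c, hc⟩
  obtain ⟨f, rfl⟩ := CEmbedding.exists_comp_eq hu hw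
  have : Nonempty X := hu.nonempty
  refine exists_lt_of_ciInf_lt (f := fun k => (M.diagram.comap u).eval φ (Fin.snoc a k)) ?_
  calc (M.diagram.comap u).eval φ.inf a
      = M.eval n φ.inf (u ∘ a) := by
        rw [M.eval_comap_diagram_of_denseRange hu, M.eval_diagram]
    _ = N.diagram.eval φ.inf (f.toFun ∘ u ∘ a) := by
        rw [N.eval_diagram, hM.2 N hN f n φ hφ]
    _ ≤ N.diagram.eval φ (Fin.snoc (f.toFun ∘ u ∘ a) c) :=
        ciInf_le (N.isPrestructure_diagram.bddBelow_range_eval φ _) c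
    _ ≤ r := hc
    _ < q := hrq

theorem CEmbedding.eval_inf_eq_of_mem_ecConstraint {N : CStructure S} (hN : N.SatT T)
    (f : CEmbedding M N) (hu : DenseRange u) {φ : CFormula S (n + 1)} (hφ : IsQF φ)
    (a : Fin n → X)
    (h : ∀ r q : ℚ, r < q → M.diagram.comap u ∈ T.ecConstraint φ a r q) :
    N.eval n φ.inf (f.toFun ∘ u ∘ a) = M.eval n φ.inf (u ∘ a) := by
  refine (f.eval_inf_le_of_isQF hφ _).antisymm (not_lt.1 fun hlt => ?_)
  obtain ⟨q, hNq, hqM⟩ := exists_rat_btwn hlt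
  obtain ⟨r, hNr, hrq⟩ := exists_rat_btwn hNq
  obtain ⟨c, hc⟩ := exists_lt_of_ciInf_lt hNr
  rw [← N.eval_diagram] at hc
  have hsolv : M.diagram.comap u ∈ T.solvable φ a r := by
    refine ⟨N, f.toFun ∘ u, hN, ?_, c, hc.le⟩
    rw [← f.comap_diagram]
    rfl
  obtain ⟨k, hk⟩ := h r q (mod_cast hrq) hsolv
  refine hqM.not_gt (lt_of_le_of_lt ?_ hk)
  rw [M.eval_comap_diagram_of_denseRange hu, Fin.comp_snoc, ← M.eval_diagram]
  exact ciInf_le (M.isPrestructure_diagram.bddBelow_range_eval φ _) (u k)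

theorem isEC_of_forall_mem_ecConstraint (hM : M.SatT T) (hu : DenseRange u)
    (h : ∀ (n : ℕ) (φ : CFormula S (n + 1)), IsQF φ → ∀ (a : Fin n → X) (r q : ℚ), r < q →
      M.diagram.comap u ∈ T.ecConstraint φ a r q) : IsEC T M := by
  refine ⟨hM, fun N hNT f n φ hφ => congr_fun ?_⟩
  have hdense : DenseRange fun a : Fin n → X => u ∘ a := DenseRange.piMap fun _ => hu
  have hN : Continuous fun b => N.eval n φ.inf (f.toFun ∘ b) :=
    (N.continuous_eval φ.inf).comp (Continuous.piMap fun _ => f.continuous)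
  exact hdense.equalizer hN (M.continuous_eval φ.inf) (funext fun a =>
    f.eval_inf_eq_of_mem_ecConstraint hNT hu hφ a (h n φ hφ a))

end ExistentiallyClosed

namespace SCode

variable {S : CSig} {x : SCode S} {n : ℕ}

/-- The atomic diagram recorded by a code. -/
def diagram (x : SCode S) : AtomicDiagram S ℕ :=
  (x.dd, x.R)

theorem diagram_injective : Injective (diagram : SCode S → AtomicDiagram S ℕ) := by
  rintro ⟨⟩ ⟨⟩ h
  simpa [diagram] using h

theorem eval_diagram (x : SCode S) (φ : CFormula S n) (v : Fin n → ℕ) :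
    x.diagram.eval φ v = x.eval n φ v := by
  induction φ <;> simp only [AtomicDiagram.eval, eval, *] <;> rfl

theorem isPrestructure_diagram (x : SCode S) : x.diagram.IsPrestructure where
  dist_mem_Icc i j := ⟨x.dd_nonneg i j, x.dd_le_one i j⟩
  dist_self := x.dd_self
  dist_comm := x.dd_symm
  dist_triangle := x.dd_triangle
  rel_mem_Icc i v := ⟨x.R_nonneg i v, x.R_le_one i v⟩
  rel_hasModulus := x.R_uc

/-- The code of an injective sequence in a structure. The sequence need not be dense, so in general
this codes a substructure. -/
def ofInjective (M : CStructure S) (u : ℕ → M.Carrier) (hu : Injective u) : SCode S where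
  dd i j := dist (u i) (u j)
  R i v := M.rel i (u ∘ v)
  dd_nonneg _ _ := dist_nonneg
  dd_le_one _ _ := M.bounded _ _
  dd_self _ := dist_self _
  dd_pos _ _ hij := dist_pos.2 (hu.ne hij)
  dd_symm _ _ := dist_comm _ _
  dd_triangle _ _ _ := dist_triangle _ _ _
  R_nonneg _ _ := M.rel_nonneg _ _
  R_le_one _ _ := M.rel_le_one _ _
  R_uc i ε hε v w := M.rel_uc i ε hε (u ∘ v) (u ∘ w)

theorem injective_of_comap_diagram_eq {M : CStructure S} {u : ℕ → M.Carrier}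
    (h : M.diagram.comap u = x.diagram) : Injective u := by
  intro i j hij
  by_contra hne
  have hd : dist (u i) (u j) = x.dd i j := congr_fun₂ (congr_arg Prod.fst h) i j
  rw [hij, dist_self] at hd
  exact (x.dd_pos i j hne).ne hd

end SCode

theorem codes_iff_comap_diagram_eq {S : CSig} {x : SCode S} {M : CStructure S} :
    Codes x M ↔ ∃ u : ℕ → M.Carrier, DenseRange u ∧ M.diagram.comap u = x.diagram :=
  exists_congr fun _ => and_congr_right fun _ =>
    ⟨fun ⟨hd, hR⟩ => Prod.ext (funext₂ hd) (funext₂ hR),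
      fun h => ⟨congr_fun₂ (congr_arg Prod.fst h), congr_fun₂ (congr_arg Prod.snd h)⟩⟩

theorem SCode.exists_codes {S : CSig} (x : SCode S) : ∃ M : CStructure S, Codes x M :=
  x.isPrestructure_diagram.exists_completion.imp fun _ => codes_iff_comap_diagram_eq.2

namespace Codes

variable {S : CSig} {x : SCode S} {M N : CStructure S} {T : CTheory S}

theorem satT_iff (h : Codes x M) : x.SatT T ↔ M.SatT T := by
  obtain ⟨u, hu, hux⟩ := codes_iff_comap_diagram_eq.1 h
  refine forall₂_congr fun c _ => ?_
  rw [SCode.sval, ← x.eval_diagram, ← hux, M.eval_comap_diagram_of_denseRange hu,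
    ← M.sval_eq_eval_diagram]

theorem separableSpace (h : Codes x M) : TopologicalSpace.SeparableSpace M.Carrier :=
  let ⟨_, hu, _⟩ := h
  .of_denseRange _ hu

theorem of_surjective_embedding (h : Codes x M) (f : CEmbedding M N) (hf : Surjective f.toFun) :
    Codes x N := by
  obtain ⟨u, hu, hux⟩ := codes_iff_comap_diagram_eq.1 h
  refine codes_iff_comap_diagram_eq.2 ⟨f.toFun ∘ u, hf.denseRange.comp hu f.continuous, ?_⟩
  rw [← hux, ← f.comap_diagram]
  rfl

end Codes

theorem SCode.satT_iff_diagram_mem_diagrams {S : CSig} {T : CTheory S}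
    (hU : IsUniversalTheory T) {x : SCode S} : x.SatT T ↔ x.diagram ∈ T.diagrams ℕ := by
  obtain ⟨M, hM⟩ := x.exists_codes
  obtain ⟨u, hu, hux⟩ := codes_iff_comap_diagram_eq.1 hM
  rw [hM.satT_iff]
  exact ⟨fun h => ⟨M, u, h, hux⟩, fun h => CTheory.satT_of_comap_mem_diagrams hU hu (hux ▸ h)⟩

namespace SCode

variable {S : CSig} {n : ℕ}

theorem isOpen_basicSet {φ : CFormula S n} (hφ : IsQF φ) (a : Fin n → ℕ) (ε : ℝ) :
    IsOpen (basicSet n φ a ε) := by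
  rcases lt_or_ge 0 ε with hε | hε
  · exact TopologicalSpace.isOpen_generateFrom_of_mem ⟨n, φ, a, ε, hφ, hε, rfl⟩
  · convert isOpen_empty
    refine eq_empty_of_forall_notMem fun x hx => (lt_of_lt_of_le hx hε).not_ge ?_
    exact x.eval_diagram φ a ▸ (x.isPrestructure_diagram.eval_mem_Icc φ a).1

theorem continuous_eval_of_isQF {φ : CFormula S n} (hφ : IsQF φ) (a : Fin n → ℕ) :
    Continuous fun x : SCode S => x.eval n φ a := by
  refine OrderTopology.continuous_iff.2 fun c => ⟨?_, isOpen_basicSet hφ a c⟩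
  convert isOpen_basicSet hφ.neg a (1 - c) using 1
  ext x
  simp [basicSet, eval]

theorem isInducing_diagram : IsInducing (diagram : SCode S → AtomicDiagram S ℕ) := by
  refine ⟨le_antisymm (continuous_iff_le_induced.1 (.prodMk ?_ ?_)) (le_generateFrom ?_)⟩
  · refine continuous_pi fun i => continuous_pi fun j => ?_
    exact continuous_eval_of_isQF (IsQF.dst 0 1) ![i, j]
  · refine continuous_pi fun i => continuous_pi fun v => ?_
    exact continuous_eval_of_isQF (IsQF.rel i id) v
  · rintro _ ⟨n, φ, a, ε, hφ, -, rfl⟩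
    refine ⟨{D | D.eval φ a < ε},
      isOpen_lt (AtomicDiagram.continuous_eval_of_isQF hφ a) continuous_const, ?_⟩
    simp only [preimage_ofPred_eq, eval_diagram]
    rfl

end SCode

/-- The space `𝔖_T` of codes of separable models of `T`. -/
abbrev CodeSpace {S : CSig} (T : CTheory S) : Type :=
  {x : SCode S // x.SatT T}

/-- The codes of existentially closed models of `T`. -/
def ecCodes {S : CSig} (T : CTheory S) : Set (CodeSpace T) :=
  {y | ∃ M : CStructure S, IsEC T M ∧ Codes y.1 M}

/-- The instances of existential closedness for a structure coded on `ℕ`: a formula `φ(ȳ, x)`,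
parameters for `ȳ` and rational bounds, in the roles they have in `CTheory.ecConstraint`. -/
abbrev ECInstance (S : CSig) : Type :=
  Σ n : ℕ, {φ : CFormula S (n + 1) // IsQF φ} × (Fin n → ℕ) × {p : ℚ × ℚ // p.1 < p.2}

/-- The codes of models of `T` that satisfy an instance of existential closedness. -/
def ECInstance.codes {S : CSig} (T : CTheory S) : ECInstance S → Set (CodeSpace T)
  | ⟨_, φ, a, p⟩ => {y | y.1.diagram ∈ T.ecConstraint φ.1 a p.1.1 p.1.2}

namespace CodeSpace

variable {S : CSig} {T : CTheory S} {n : ℕ}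

theorem isInducing_diagram : IsInducing fun y : CodeSpace T => y.1.diagram :=
  SCode.isInducing_diagram.comp .subtypeVal

theorem range_diagram (hU : IsUniversalTheory T) :
    range (fun y : CodeSpace T => y.1.diagram) =
      {D | D ∈ T.diagrams ℕ ∧ ∀ i j, i ≠ j → D.1 i j ≠ 0} := by
  refine Subset.antisymm ?_ ?_
  · rintro _ ⟨y, rfl⟩
    exact ⟨(SCode.satT_iff_diagram_mem_diagrams hU).1 y.2, fun i j hij => (y.1.dd_pos i j hij).ne'⟩
  · rintro _ ⟨⟨M, u, hM, rfl⟩, hsep⟩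
    have hu : Injective u := fun i j hij => by_contra fun hne =>
      hsep i j hne (dist_eq_zero.2 hij)
    exact ⟨⟨SCode.ofInjective M u hu, (SCode.satT_iff_diagram_mem_diagrams hU).2 ⟨M, u, hM, rfl⟩⟩,
      rfl⟩

theorem baireSpace (hU : IsUniversalTheory T) : BaireSpace (CodeSpace T) := by
  have : CompactSpace (T.diagrams ℕ) :=
    isCompact_iff_compactSpace.1 (CTheory.isCompact_diagrams hU ℕ)
  let e : CodeSpace T → T.diagrams ℕ := codRestrict (fun y => y.1.diagram) _ fun y =>
    (SCode.satT_iff_diagram_mem_diagrams hU).1 y.2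
  have he : IsEmbedding e := .codRestrict
    ⟨isInducing_diagram, SCode.diagram_injective.comp Subtype.val_injective⟩ _ _
  have hrange : range e = ⋂ i, ⋂ j, {D : T.diagrams ℕ | i ≠ j → D.1.1 i j ≠ 0} := by
    rw [range_codRestrict, range_diagram hU]
    ext D
    simp
  have hGδ : IsGδ (range e) := by
    rw [hrange]
    refine .iInter fun i => .iInter_of_isOpen fun j => ?_
    simp only [imp_iff_not_or, ofPred_or]
    exact isOpen_const.union (isOpen_ne_fun (by fun_prop) continuous_const)
  have := hGδ.baireSpace_of_t2Space_locallyCompactSpace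
  exact he.toHomeomorph.symm.baireSpace

theorem mem_closure_of_injective (hU : IsUniversalTheory T) {y : CodeSpace T} {N : CStructure S}
    (hN : N.SatT T) {w : ℕ → N.Carrier} (hw : N.diagram.comap w = y.1.diagram)
    {u : ℕ → ℕ → N.Carrier} (hu : ∀ m, Injective (u m)) (huw : Tendsto u atTop (𝓝 w))
    {s : Set (AtomicDiagram S ℕ)} (hs : ∀ᶠ m in atTop, N.diagram.comap (u m) ∈ s) :
    y ∈ closure {z : CodeSpace T | z.1.diagram ∈ s} := by
  let z (m : ℕ) : CodeSpace T := ⟨SCode.ofInjective N (u m) (hu m),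
    (SCode.satT_iff_diagram_mem_diagrams hU).2 ⟨N, u m, hN, rfl⟩⟩
  refine mem_closure_of_tendsto (f := z) (isInducing_diagram.tendsto_nhds_iff.2 ?_) hs
  rw [← hw]
  exact (N.continuous_comap_diagram.tendsto w).comp huw

theorem dense_setOfPred_diagram_mem_ecConstraint (hU : IsUniversalTheory T)
    {φ : CFormula S (n + 1)} (hφ : IsQF φ) (a : Fin n → ℕ) {r q : ℝ} (hrq : r < q) :
    Dense {y : CodeSpace T | y.1.diagram ∈ T.ecConstraint φ a r q} := by
  intro y
  by_contra hy
  obtain ⟨⟨N, w, hN, hw, c, hc⟩, hk⟩ := Classical.not_imp.1 (fun h => hy (subset_closure h))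
  push Not at hk
  have hcw : ∀ k, w k ≠ c := by
    rintro k rfl
    refine (hrq.trans_le (hk k)).not_ge ?_
    rwa [← hw, AtomicDiagram.eval_comap_of_isQF _ _ hφ, Fin.comp_snoc]
  refine hy (mem_closure_of_injective hU hN hw (u := fun m => update w m c)
    (fun m => injective_update_of_forall_ne (SCode.injective_of_comap_diagram_eq hw) hcw m)
    (tendsto_update_atTop w c) ?_)
  have hlarge : ∀ᶠ m in atTop, ∀ j, a j ≠ m :=
    eventually_all.2 fun j => (eventually_ne_atTop (a j)).mono fun _ h => h.symm
  filter_upwards [hlarge] with m hm _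
  refine ⟨m, lt_of_le_of_lt ?_ hrq⟩
  have hcomp : update w m c ∘ a = w ∘ a := funext fun j => update_of_ne (hm j) _ _
  rwa [AtomicDiagram.eval_comap_of_isQF _ _ hφ, Fin.comp_snoc, update_self, hcomp]

end CodeSpace

section Genericity

variable {S : CSig} {T : CTheory S}

theorem ecCodes_eq_iInter (T : CTheory S) :
    ecCodes T = ⋂ i : ECInstance S, ECInstance.codes T i := by
  refine Subset.antisymm (fun y ⟨M, hM, hyM⟩ => ?_) fun y hy => ?_
  · obtain ⟨u, hu, huy⟩ := codes_iff_comap_diagram_eq.1 hyM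
    refine mem_iInter.2 fun ⟨n, φ, a, p⟩ => ?_
    rw [ECInstance.codes, mem_ofPred_eq, ← huy]
    exact hM.comap_diagram_mem_ecConstraint hu φ.2 a (mod_cast p.2)
  · obtain ⟨M, hyM⟩ := y.1.exists_codes
    obtain ⟨u, hu, huy⟩ := codes_iff_comap_diagram_eq.1 hyM
    refine ⟨M, isEC_of_forall_mem_ecConstraint (hyM.satT_iff.1 y.2) hu ?_, hyM⟩
    intro n φ hφ a r q hrq
    exact huy ▸ mem_iInter.1 hy ⟨n, ⟨φ, hφ⟩, a, ⟨(r, q), hrq⟩⟩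

theorem isGδ_and_dense_ecCodes (hU : IsUniversalTheory T) :
    IsGδ (ecCodes T) ∧ Dense (ecCodes T) := by
  have hopen (i : ECInstance S) : IsOpen (ECInstance.codes T i) :=
    let ⟨_, φ, a, _⟩ := i
    (CTheory.isOpen_ecConstraint hU φ.2 a _ _).preimage CodeSpace.isInducing_diagram.continuous
  have hdense (i : ECInstance S) : Dense (ECInstance.codes T i) :=
    let ⟨_, φ, a, p⟩ := i
    CodeSpace.dense_setOfPred_diagram_mem_ecConstraint hU φ.2 a (mod_cast p.2)
  have := CodeSpace.baireSpace hU
  rw [ecCodes_eq_iInter]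
  exact ⟨.iInter_of_isOpen hopen, dense_iInter_of_isOpen hopen hdense⟩

end Genericity

theorem ec_model_is_generic_general (S : CSig) (T : CTheory S) (hU : IsUniversalTheory T)
    (hcat : ∀ M N : CStructure S, IsEC T M → IsEC T N →
      TopologicalSpace.SeparableSpace M.Carrier → TopologicalSpace.SeparableSpace N.Carrier →
      ∃ f : CEmbedding M N, Surjective f.toFun)
    (M : CStructure S) (hsep : TopologicalSpace.SeparableSpace M.Carrier) (hec : IsEC T M) :
    IsGδ {y : {x : SCode S // x.SatT T} | Codes y.1 M} ∧
      Dense {y : {x : SCode S // x.SatT T} | Codes y.1 M} := by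
  suffices {y : CodeSpace T | Codes y.1 M} = ecCodes T from this ▸ isGδ_and_dense_ecCodes hU
  refine Subset.antisymm (fun y hy => ⟨M, hec, hy⟩) fun y ⟨N, hN, hyN⟩ => ?_
  obtain ⟨f, hf⟩ := hcat N M hN hec hyN.separableSpace hsep
  exact hyN.of_surjective_embedding f hf

/-- If a universal theory `T` has an ℵ₀-categorical model companion
`T'`, then any existentially closed separable model `M` of `T` is generic in `𝔖_T`:
its isomorphism class `{y ∈ 𝔖_T : y codes a structure isomorphic to M}` is a `G_δ`
dense subset of `𝔖_T`. -/
theorem ec_model_is_generic (S : CSig) (T T' : CTheory S)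
    (hT : IsTheory T) (hT' : IsTheory T') (hU : IsUniversalTheory T)
    (hmc : IsModelCompanion T T') (hcat : Aleph0Categorical T')
    (M : CStructure S) (hsep : TopologicalSpace.SeparableSpace M.Carrier)
    (hec : IsEC T M) :
    IsGδ {y : {x : SCode S // x.SatT T} | Codes y.1 M} ∧
      Dense {y : {x : SCode S // x.SatT T} | Codes y.1 M} :=
  ec_model_is_generic_general S T hU
    (fun N₁ N₂ h₁ h₂ => hcat N₁ N₂ ((hmc N₁).2 h₁) ((hmc N₂).2 h₂)) M hsep hec
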